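/- arXiv:1708.02719 — 6 statements merged into one kernel-verified Lean document; each statement's English description precedes it below -/
import Mathlib

section
/- Let μ be an infinite cardinal, κ = μ⁺, and assume cf(2^μ) = κ. Let Q be a separative, atomless partial order with |Q| ≤ 2^μ in which every decreasing sequence of length < κ has a lower bound. Then there exist a dense subset D of Q, a dense subset E of Col(κ, 2^μ), and an order isomorphism between D and E. -/
open Cardinal

/-- Two elements of a partial order are incompatible if no element lies below both. -/
def Incompat {Q : Type} [PartialOrder Q] (p q : Q) : Prop := ¬ ∃ r, r ≤ p ∧ r ≤ q

/-- A subset `D` is dense if every element has an element of `D` below it. -/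
def IsDenseSub {Q : Type} [PartialOrder Q] (D : Set Q) : Prop := ∀ p : Q, ∃ q ∈ D, q ≤ p

/-- `ColLT κ α β`: partial functions from `α` to `β` with domain of size `< κ`,
ordered by reverse inclusion.  With `α` of size `κ` and `β` of size `θ`,
this is the Lévy collapse `Col(κ, θ)`. -/
def ColLT (κ : Cardinal) (α β : Type) : Type :=
  {f : α → Option β // #{a | f a ≠ none} < κ}

instance (κ : Cardinal) (α β : Type) : PartialOrder (ColLT κ α β) where
  le f g := ∀ a, g.1 a ≠ none → f.1 a = g.1 a
  le_refl _ _ _ := rfl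
  le_trans f g h hfg hgh a ha := by
    have h1 := hgh a ha
    have h2 := hfg a (by rw [h1]; exact ha)
    rw [h2, h1]
  le_antisymm f g hfg hgf := Subtype.ext (funext fun a => by
    by_cases hg : g.1 a = none
    · by_cases hf : f.1 a = none
      · rw [hf, hg]
      · exact (hgf a hf).symm
    · exact hfg a hg)

namespace Williams

theorem Incompat.symm' {Q : Type} [PartialOrder Q] {p q : Q} (h : Incompat p q) : Incompat q p :=
  fun ⟨r, h1, h2⟩ => h ⟨r, h2, h1⟩

theorem Incompat.mono' {Q : Type} [PartialOrder Q] {p q p' q' : Q} (h : Incompat p q)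
    (hp : p' ≤ p) (hq : q' ≤ q) : Incompat p' q' :=
  fun ⟨r, h1, h2⟩ => h ⟨r, h1.trans hp, h2.trans hq⟩

/-- The set of lower bounds of a branch. -/
def preL {K X Q : Type} [LinearOrder K] [PartialOrder Q] (L0 : Set Q) (α : K)
    (F : ∀ β, β < α → (K → X) → Q) (s : K → X) : Set Q :=
  {q | q ∈ L0 ∧ ∀ β (h : β < α), q ≤ F β h s}

/-- Generic tree construction. -/
noncomputable def treeF {K X Q : Type} [LinearOrder K] [WellFoundedLT K] [PartialOrder Q]
    (L0 : Set Q) (e : K → Set (Set Q) → Set Q → X → Q) : K → (K → X) → Q :=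
  WellFounded.fix (C := fun _ => (K → X) → Q) (wellFounded_lt (α := K)) (fun α F s =>
    e α (Set.range (preL L0 α F)) (preL L0 α F s) (s α))

def treeL {K X Q : Type} [LinearOrder K] [WellFoundedLT K] [PartialOrder Q]
    (L0 : Set Q) (e : K → Set (Set Q) → Set Q → X → Q) (α : K) (s : K → X) : Set Q :=
  {q | q ∈ L0 ∧ ∀ β < α, q ≤ treeF L0 e β s}

section
variable {K X Q : Type} [LinearOrder K] [WellFoundedLT K] [PartialOrder Q]
    (L0 : Set Q) (e : K → Set (Set Q) → Set Q → X → Q)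

theorem treeF_eq (α : K) (s : K → X) :
    treeF L0 e α s = e α (Set.range (treeL L0 e α)) (treeL L0 e α s) (s α) := by
  unfold treeF
  rw [WellFounded.fix_eq]
  rfl

theorem treeF_congr (α : K) : ∀ (s t : K → X), (∀ β ≤ α, s β = t β) →
    treeF L0 e α s = treeF L0 e α t := by
  induction α using WellFoundedLT.induction with
  | ind α ih =>
    intro s t h
    have : treeL L0 e α s = treeL L0 e α t := by
      ext q
      refine and_congr_right fun _ => forall₂_congr fun β hβ => ?_
      rw [ih β hβ s t fun γ hγ => h γ (hγ.trans hβ.le)]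
    rw [treeF_eq, treeF_eq, this, h α le_rfl]

theorem treeL_congr (α : K) (s t : K → X) (h : ∀ β < α, s β = t β) :
    treeL L0 e α s = treeL L0 e α t := by
  ext q
  refine and_congr_right fun _ => forall₂_congr fun β hβ => ?_
  rw [treeF_congr L0 e β s t fun γ hγ => h γ (hγ.trans_lt hβ)]

theorem treeL_lower (hL : IsLowerSet L0) (α : K) (s : K → X) : IsLowerSet (treeL L0 e α s) :=
  fun _ _ hab ha => ⟨hL hab ha.1, fun β hβ => hab.trans (ha.2 β hβ)⟩

theorem treeF_mem
  (hcl : ∀ α : K, ∀ f : K → Q, (∀ β γ, β ≤ γ → γ < α → f γ ≤ f β) → ∃ q, ∀ β < α, q ≤ f β)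
  (hL : IsLowerSet L0) (hne : L0.Nonempty)
  (he : ∀ α LL L, L.Nonempty → IsLowerSet L → ∀ x, e α LL L x ∈ L)
    (α : K) (s : K → X) :
    (treeL L0 e α s).Nonempty ∧ treeF L0 e α s ∈ treeL L0 e α s := by
  induction α using WellFoundedLT.induction with
  | ind α ih =>
    have h1 : (treeL L0 e α s).Nonempty := by
      obtain ⟨q, hq⟩ := hcl α (fun β => treeF L0 e β s) (by
        intro β γ h1 h2
        rcases h1.eq_or_lt with h | h
        · rw [h]
        · exact (ih γ h2).2.2 β h)
      by_cases h : ∃ β, β < α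
      · obtain ⟨β, hβ⟩ := h
        exact ⟨q, hL (hq β hβ) (ih β hβ).2.1, hq⟩
      · push Not at h
        obtain ⟨p, hp⟩ := hne
        exact ⟨p, hp, fun β hβ => absurd hβ (h β).not_gt⟩
    refine ⟨h1, ?_⟩
    rw [treeF_eq]
    exact he _ _ _ h1 (treeL_lower L0 e hL α s) _

theorem treeF_anti
  (hcl : ∀ α : K, ∀ f : K → Q, (∀ β γ, β ≤ γ → γ < α → f γ ≤ f β) → ∃ q, ∀ β < α, q ≤ f β)
  (hL : IsLowerSet L0) (hne : L0.Nonempty)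
  (he : ∀ α LL L, L.Nonempty → IsLowerSet L → ∀ x, e α LL L x ∈ L)
    (s : K → X) {β γ : K} (h : β ≤ γ) : treeF L0 e γ s ≤ treeF L0 e β s := by
  rcases h.eq_or_lt with h | h
  · rw [h]
  · exact (treeF_mem L0 e hcl hL hne he γ s).2.2 β h

theorem treeF_incompat
  (hcl : ∀ α : K, ∀ f : K → Q, (∀ β γ, β ≤ γ → γ < α → f γ ≤ f β) → ∃ q, ∀ β < α, q ≤ f β)
  (hL : IsLowerSet L0) (hne : L0.Nonempty)
  (he : ∀ α LL L, L.Nonempty → IsLowerSet L → ∀ x, e α LL L x ∈ L)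
   
    (hi : ∀ α LL L, L.Nonempty → IsLowerSet L → ∀ x y, x ≠ y → Incompat (e α LL L x) (e α LL L y))
    (s t : K → X) (β : K) (hβ : s β ≠ t β) :
    ∃ γ ≤ β, Incompat (treeF L0 e γ s) (treeF L0 e γ t) := by
  have hw := WellFounded.has_min (wellFounded_lt (α := K)) {γ | s γ ≠ t γ} ⟨β, hβ⟩
  obtain ⟨γ, hγ, hm⟩ := hw
  refine ⟨γ, not_lt.1 (hm β hβ), ?_⟩
  have hL' : treeL L0 e γ s = treeL L0 e γ t := treeL_congr L0 e γ s t (by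
    intro δ hδ
    by_contra h
    exact hm δ h hδ)
  rw [treeF_eq, treeF_eq, hL']
  exact hi _ _ _ (treeF_mem L0 e hcl hL hne he γ t).1 (treeL_lower L0 e hL γ t) _ _ hγ

end

section
variable {K Q : Type} [LinearOrder K] [WellFoundedLT K] [PartialOrder Q]

theorem distrib
  (hcl : ∀ α : K, ∀ f : K → Q, (∀ β γ, β ≤ γ → γ < α → f γ ≤ f β) → ∃ q, ∀ β < α, q ≤ f β)
    (α : K) (U : K → Set Q) (hU : ∀ β < α, IsLowerSet (U β))
    (hd : ∀ β < α, ∀ q, ∃ p ∈ U β, p ≤ q) (q : Q) : ∃ p ≤ q, ∀ β < α, p ∈ U β := by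
  classical
  have : ∀ (β : K) (L : Set Q), ∃ p, (L.Nonempty → IsLowerSet L → p ∈ L ∧ (β < α → p ∈ U β)) := by
    intro β L
    by_cases h : L.Nonempty ∧ IsLowerSet L
    · obtain ⟨⟨a, ha⟩, hl⟩ := h
      by_cases hb : β < α
      · obtain ⟨p, hp, hpa⟩ := hd β hb a
        exact ⟨p, fun _ _ => ⟨hl hpa ha, fun _ => hp⟩⟩
      · exact ⟨a, fun _ _ => ⟨ha, fun h => absurd h hb⟩⟩
    · exact ⟨q, fun h1 h2 => absurd ⟨h1, h2⟩ h⟩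
  choose c hc using this
  let e : K → Set (Set Q) → Set Q → Unit → Q := fun α _ L _ => c α L
  have he : ∀ α LL L, L.Nonempty → IsLowerSet L → ∀ x, e α LL L x ∈ L :=
    fun α LL L h1 h2 x => (hc α L h1 h2).1
  have hm := fun α => treeF_mem (Set.Iic q) e hcl (isLowerSet_Iic q) ⟨q, le_rfl⟩ he α (fun _ => ())
  obtain ⟨p, hp⟩ := (hm α).1
  refine ⟨p, hp.1, fun β hβ => hU β hβ (hp.2 β hβ) ?_⟩
  rw [treeF_eq]
  exact (hc β _ (hm β).1 (treeL_lower _ e (isLowerSet_Iic q) _ _)).2 hβ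

theorem bigAntichain
  (hcl : ∀ α : K, ∀ f : K → Q, (∀ β γ, β ≤ γ → γ < α → f γ ≤ f β) → ∃ q, ∀ β < α, q ≤ f β)
    (hat : ∀ p : Q, ∃ q r, q ≤ p ∧ r ≤ p ∧ Incompat q r) (α : K) (q : Q) :
    ∃ g : (Set.Iio α → Bool) → Q, (∀ x, g x ≤ q) ∧ ∀ x y, x ≠ y → Incompat (g x) (g y) := by
  classical
  choose a b ha hb hab using hat
  have : ∀ L : Set Q, ∃ p, L.Nonempty → p ∈ L := by
    intro L
    by_cases h : L.Nonempty
    · exact ⟨h.some, fun _ => h.some_mem⟩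
    · exact ⟨q, fun h' => absurd h' h⟩
  choose c hc using this
  let e : K → Set (Set Q) → Set Q → Bool → Q := fun α _ L x => if x then a (c L) else b (c L)
  have he : ∀ α LL L, L.Nonempty → IsLowerSet L → ∀ x, e α LL L x ∈ L := by
    intro α LL L h1 h2 x
    cases x
    · exact h2 (hb _) (hc L h1)
    · exact h2 (ha _) (hc L h1)
  have hi : ∀ α LL L, L.Nonempty → IsLowerSet L → ∀ x y, x ≠ y →
      Incompat (e α LL L x) (e α LL L y) := by
    intro α LL L h1 h2 x y hxy
    cases x <;> cases y
    · exact absurd rfl hxy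
    · exact Incompat.symm' (hab _)
    · exact hab _
    · exact absurd rfl hxy
  have hm := fun s => (treeF_mem (Set.Iic q) e hcl (isLowerSet_Iic q) ⟨q, le_rfl⟩ he α s).1
  choose r hr using hm
  let ext : (Set.Iio α → Bool) → K → Bool := fun x β => if h : β < α then x ⟨β, h⟩ else true
  refine ⟨fun x => r (ext x), fun x => (hr _).1, fun x y hxy => ?_⟩
  obtain ⟨⟨β, hβ⟩, hne⟩ := Function.ne_iff.1 hxy
  obtain ⟨γ, hγ, hinc⟩ := treeF_incompat (Set.Iic q) e hcl (isLowerSet_Iic q) ⟨q, le_rfl⟩ he hi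
    (ext x) (ext y) β (by
      have hβ' : β < α := hβ
      simpa [ext, hβ'] using hne)
  exact Incompat.mono' hinc ((hr _).2 γ (hγ.trans_lt hβ)) ((hr _).2 γ (hγ.trans_lt hβ))
end

theorem zorn_pairwise {Q : Type} (r : Q → Q → Prop) (hr : ∀ a b, r a b → r b a) (S Y : Set Q) (hY : Y ⊆ S)
    (hp : Y.Pairwise r) : ∃ Z, Y ⊆ Z ∧ Z ⊆ S ∧ Z.Pairwise r ∧ ∀ z ∈ S, z ∈ Z ∨ ∃ y ∈ Z, ¬ r z y := by
  obtain ⟨Z, hYZ, hZ⟩ := zorn_subset_nonempty {Z : Set Q | Z ⊆ S ∧ Z.Pairwise r} (by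
    intro c hc hch hne
    refine ⟨⋃₀ c, ⟨Set.sUnion_subset fun s hs => (hc hs).1, ?_⟩, fun s hs => Set.subset_sUnion_of_mem hs⟩
    exact (Set.pairwise_sUnion hch.directedOn).2 fun s hs => (hc hs).2) Y ⟨hY, hp⟩
  refine ⟨Z, hYZ, hZ.prop.1, hZ.prop.2, fun z hz => ?_⟩
  by_contra h
  push Not at h
  apply h.1
  refine hZ.le_of_ge (y := insert z Z) ⟨Set.insert_subset hz hZ.prop.1, ?_⟩ (Set.subset_insert _ _)
    (Set.mem_insert _ _)
  exact hZ.prop.2.insert fun b hb _ => ⟨h.2 b hb, hr _ _ (h.2 b hb)⟩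

/-- Systems of distinct representatives for large sets. -/
theorem sdr {I Q : Type} (C : I → Set Q) (hC : ∀ i, #I < #(C i)) :
    ∃ x : I → Q, (∀ i, x i ∈ C i) ∧ Function.Injective x := by
  classical
  obtain ⟨_, _⟩ : ∃ _ : LinearOrder I, WellFoundedLT I := exists_wellFoundedLT I
  have key : ∀ (i : I) (f : ∀ j, j < i → Q), ∃ z ∈ C i, ∀ j h, z ≠ f j h := by
    intro i f
    by_contra hcon
    push Not at hcon
    have : C i ⊆ Set.range (fun j : Set.Iio i => f j.1 j.2) := by
      intro z hz
      obtain ⟨j, h, rfl⟩ := hcon z hz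
      exact ⟨⟨j, h⟩, rfl⟩
    exact absurd ((mk_le_mk_of_subset this).trans (mk_range_le.trans (mk_set_le _))) (hC i).not_ge
  choose c hc hc' using key
  let x : I → Q := WellFounded.fix (C := fun _ => Q) (wellFounded_lt (α := I)) c
  have hx : ∀ i, x i = c i (fun j _ => x j) := fun i => WellFounded.fix_eq _ _ _
  have hlt : ∀ i j, j < i → x i ≠ x j := by
    intro i j h
    rw [hx i]
    exact hc' i _ j h
  refine ⟨x, fun i => by rw [hx]; exact hc _ _, fun i j hij => ?_⟩
  rcases lt_trichotomy i j with h | h | h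
  · exact absurd hij.symm (hlt _ _ h)
  · exact h
  · exact absurd hij (hlt _ _ h)


theorem disjRef {I Q : Type} [PartialOrder Q] (lam θ : Cardinal) (hlam : ℵ₀ ≤ lam) (hI : #I ≤ lam)
    (hlt : lam < θ)
    (hA : ∀ q : Q, ∃ X : Set Q, θ ≤ #X ∧ (∀ x ∈ X, x ≤ q) ∧ X.Pairwise Incompat) (p : I → Q) :
    ∃ r : I → Q, (∀ i, r i ≤ p i) ∧ ∀ i j, i ≠ j → Incompat (r i) (r j) := by
  classical
  choose X hX1 hX2 hX3 using fun i => hA (p i)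
  let C : I → I → Set Q := fun j i => {x | x ∈ X j ∧ ¬ Incompat x (p i)}
  let R : I → I → Prop := fun j i => lam < #(C j i)
  have hRR : ∀ i, R i i := by
    intro i
    have : C i i = X i := by
      ext x
      refine ⟨fun h => h.1, fun h => ⟨h, fun h' => h' ⟨x, le_rfl, hX2 i x h⟩⟩⟩
    change lam < #(C i i)
    rw [this]
    exact hlt.trans_le (hX1 i)
  obtain ⟨J, -, -, hJ, hJm⟩ := zorn_pairwise (fun i j => ¬ (R i j ∧ R j i))
    (fun a b h h' => h ⟨h'.2, h'.1⟩) Set.univ ∅ (Set.empty_subset _) (Set.pairwise_empty _)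
  have ho : ∀ i, ∃ j ∈ J, R j i := by
    intro i
    rcases hJm i (Set.mem_univ _) with h | ⟨j, hj, h⟩
    · exact ⟨i, h, hRR i⟩
    · exact ⟨j, hj, (not_not.1 h).2⟩
  choose o hoJ hoR using ho
  let B : I → Set Q := fun j => ⋃ i : {i // ¬ R j i}, C j i
  have hB : ∀ j, #(B j) ≤ lam := by
    intro j
    refine (mk_iUnion_le_sum_mk).trans ((sum_le_sum _ (fun _ => lam) fun i => not_lt.1 i.2).trans ?_)
    rw [sum_const']
    exact (mul_le_mul' ((mk_subtype_le _).trans hI) le_rfl).trans (mul_eq_self hlam).le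
  have hC' : ∀ i, #I < #(C (o i) i \ B (o i) : Set Q) := by
    intro i
    refine hI.trans_lt ?_
    by_contra h
    rw [not_lt] at h
    have h1 : #(C (o i) i) ≤ #((C (o i) i \ B (o i)) ∪ B (o i) : Set Q) :=
      mk_le_mk_of_subset fun x hx => by
        by_cases hb : x ∈ B (o i)
        · exact Or.inr hb
        · exact Or.inl ⟨hx, hb⟩
    have h2 := (h1.trans (mk_union_le _ _)).trans (add_le_add h (hB _))
    rw [add_eq_self hlam] at h2
    exact absurd h2 (hoR i).not_ge
  obtain ⟨x, hx, hinj⟩ := sdr _ hC'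
  have hr : ∀ i, ∃ r, r ≤ x i ∧ r ≤ p i := fun i => not_not.1 (hx i).1.2
  choose r hrx hrp using hr
  have key : ∀ i j, ¬ R (o i) (o j) → Incompat (x i) (x j) := by
    intro i j h
    have h1 : x i ∉ C (o i) (o j) := fun hc => (hx i).2 (Set.mem_iUnion.2 ⟨⟨o j, h⟩, hc⟩)
    have h2 : Incompat (x i) (p (o j)) := by
      by_contra h3
      exact h1 ⟨(hx i).1.1, h3⟩
    exact Incompat.mono' h2 le_rfl (hX2 _ _ (hx j).1.1)
  refine ⟨r, hrp, fun i j hij => Incompat.mono' ?_ (hrx i) (hrx j)⟩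
  by_cases h : o i = o j
  · have h1 := (hx i).1.1
    rw [h] at h1
    exact hX3 _ h1 (hx j).1.1 (hinj.ne hij)
  · have := hJ (hoJ i) (hoJ j) h
    rcases not_and_or.1 this with h' | h'
    · exact key i j h'
    · exact Incompat.symm' (key j i h')

theorem enumAntichain {Θ Q : Type} [PartialOrder Q] (hΘne : #Θ ≠ 0) (hQ : #Q ≤ #Θ)
    (hA : ∀ q : Q, ∃ X : Set Q, #Θ ≤ #X ∧ (∀ x ∈ X, x ≤ q) ∧ X.Pairwise Incompat)
    (R : Set Q) (hR : R.Pairwise Incompat) (L : Set Q) (hne : L.Nonempty) (hL : IsLowerSet L) :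
    ∃ e : Θ → Q, (∀ x, e x ∈ L) ∧ (∀ x y, x ≠ y → Incompat (e x) (e y)) ∧
      (∀ p ∈ L, ∃ x, ¬ Incompat p (e x)) ∧ (∀ r ∈ R, r ∈ L → ∃ x, e x ≤ r) := by
  classical
  obtain ⟨R', hR'ne, hR'L, hR', hRR'⟩ : ∃ R' : Set Q, R'.Nonempty ∧ R' ⊆ L ∧ R'.Pairwise Incompat ∧
      ∀ r ∈ R, r ∈ L → r ∈ R' := by
    by_cases h : (R ∩ L).Nonempty
    · exact ⟨R ∩ L, h, Set.inter_subset_right, hR.mono Set.inter_subset_left, fun r h1 h2 => ⟨h1, h2⟩⟩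
    · obtain ⟨p, hp⟩ := hne
      exact ⟨{p}, ⟨p, rfl⟩, by simpa using hp, Set.pairwise_singleton _ _,
        fun r h1 h2 => absurd ⟨r, h1, h2⟩ h⟩
  choose X hX1 hX2 hX3 using hA
  let Y : Set Q := ⋃ r ∈ R', X r
  have hYm : ∀ {y}, y ∈ Y ↔ ∃ r ∈ R', y ∈ X r := by
    intro y
    simp [Y]
  have hYL : Y ⊆ L := by
    intro y hy
    obtain ⟨r, hr, hy⟩ := hYm.1 hy
    exact hL (hX2 r y hy) (hR'L hr)
  have hYp : Y.Pairwise Incompat := by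
    intro y hy z hz hyz
    obtain ⟨r, hr, hy⟩ := hYm.1 hy
    obtain ⟨t, ht, hz⟩ := hYm.1 hz
    by_cases h : r = t
    · subst h
      exact hX3 r hy hz hyz
    · exact Incompat.mono' (hR' hr ht h) (hX2 _ _ hy) (hX2 _ _ hz)
  obtain ⟨Z, hYZ, hZL, hZp, hZm⟩ := zorn_pairwise Incompat (fun _ _ h => Incompat.symm' h) L Y hYL hYp
  have hc : #Θ = #Z := by
    obtain ⟨r, hr⟩ := hR'ne
    exact le_antisymm ((hX1 r).trans (mk_le_mk_of_subset fun y hy => hYZ (hYm.2 ⟨r, hr, hy⟩)))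
      ((mk_set_le _).trans hQ)
  obtain ⟨f⟩ := Cardinal.eq.1 hc
  refine ⟨fun x => f x, fun x => hZL (f x).2, fun x y hxy => hZp (f x).2 (f y).2 ?_, ?_, ?_⟩
  · exact fun h => hxy (f.injective (Subtype.ext h))
  · intro p hp
    rcases hZm p hp with h | ⟨y, hy, h⟩
    · refine ⟨f.symm ⟨p, h⟩, ?_⟩
      simp only [Equiv.apply_symm_apply]
      exact fun h => h ⟨p, le_rfl, le_rfl⟩
    · refine ⟨f.symm ⟨y, hy⟩, ?_⟩
      simp only [Equiv.apply_symm_apply]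
      exact h
  · intro r hr hrL
    have h0 : Nonempty (X r) := by
      rw [← mk_ne_zero_iff]
      intro h0
      have := hX1 r
      rw [h0] at this
      exact hΘne (nonpos_iff_eq_zero.1 this)
    obtain ⟨⟨y, hy⟩⟩ := h0
    refine ⟨f.symm ⟨y, hYZ (hYm.2 ⟨r, hRR' r hr hrL, hy⟩)⟩, ?_⟩
    simp only [Equiv.apply_symm_apply]
    exact hX2 r y hy

theorem core {K Θ Q : Type} [LinearOrder K] [WellFoundedLT K] [PartialOrder Q]
    (hcl : ∀ α : K, ∀ f : K → Q, (∀ β γ, β ≤ γ → γ < α → f γ ≤ f β) → ∃ q, ∀ β < α, q ≤ f β)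
    (hne : Nonempty Q) (hΘ : ℵ₀ < #Θ) (hQ : #Q ≤ #Θ)
    (hA : ∀ q : Q, ∃ X : Set Q, #Θ ≤ #X ∧ (∀ x ∈ X, x ≤ q) ∧ X.Pairwise Incompat)
    (Qs : K → Set Q) (hQs : ∀ α, #(Qs α) < #Θ) (hcov : ∀ q, ∃ α, q ∈ Qs α) :
    ∃ F : K → (K → Θ) → Q,
      (∀ α s t, (∀ β ≤ α, s β = t β) → F α s = F α t) ∧
      (∀ s β γ, β ≤ γ → F γ s ≤ F β s) ∧
      (∀ s t β, s β ≠ t β → ∃ γ ≤ β, Incompat (F γ s) (F γ t)) ∧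
      (∀ q, ∃ α s, F α s ≤ q) := by
  classical
  have hR : ∀ (α : K) (LL : Set (Set Q)), ∃ R : Set Q, R.Pairwise Incompat ∧
      ((∀ L ∈ LL, IsLowerSet L) → ∀ q ∈ Qs α, ∀ L ∈ LL, ∀ p ∈ L, p ≤ q →
        ∃ L' ∈ LL, ∃ r ∈ R, r ∈ L' ∧ r ≤ q) := by
    intro α LL
    let I := {q // q ∈ Qs α ∧ ∃ L ∈ LL, ∃ p ∈ L, p ≤ q}
    have hI : #I < #Θ := (mk_le_mk_of_subset (s := {q | q ∈ Qs α ∧ ∃ L ∈ LL, ∃ p ∈ L, p ≤ q})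
      (t := Qs α) fun q hq => hq.1).trans_lt (hQs α)
    choose M hM p hp hpq using fun i : I => i.2.2
    obtain ⟨r, hr, hri⟩ := disjRef (max ℵ₀ #I) #Θ (le_max_left _ _) (le_max_right _ _)
      (max_lt hΘ hI) hA p
    refine ⟨Set.range r, ?_, ?_⟩
    · rintro _ ⟨i, rfl⟩ _ ⟨j, rfl⟩ h
      exact hri i j fun h' => h (by rw [h'])
    · intro hlow q hq L hL p' hp' hpq'
      let i : I := ⟨q, hq, L, hL, p', hp', hpq'⟩
      exact ⟨M i, hM i, r i, ⟨i, rfl⟩, hlow _ (hM i) (hr i) (hp i), (hr i).trans (hpq i)⟩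
  choose R hR1 hR2 using hR
  have hE : ∀ (α : K) (LL : Set (Set Q)) (L : Set Q), ∃ e : Θ → Q, L.Nonempty → IsLowerSet L →
      (∀ x, e x ∈ L) ∧ (∀ x y, x ≠ y → Incompat (e x) (e y)) ∧
      (∀ p ∈ L, ∃ x, ¬ Incompat p (e x)) ∧ (∀ r ∈ R α LL, r ∈ L → ∃ x, e x ≤ r) := by
    intro α LL L
    by_cases h : L.Nonempty ∧ IsLowerSet L
    · obtain ⟨e, he⟩ := enumAntichain (aleph0_pos.trans hΘ).ne' hQ hA (R α LL) (hR1 α LL) L h.1 h.2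
      exact ⟨e, fun _ _ => he⟩
    · exact ⟨fun _ => hne.some, fun h1 h2 => absurd ⟨h1, h2⟩ h⟩
  choose e he using hE
  have hu : IsLowerSet (Set.univ : Set Q) := isLowerSet_univ
  have hn : (Set.univ : Set Q).Nonempty := Set.univ_nonempty
  have he1 : ∀ α LL L, L.Nonempty → IsLowerSet L → ∀ x, e α LL L x ∈ L :=
    fun α LL L h1 h2 => (he α LL L h1 h2).1
  have he2 : ∀ α LL L, L.Nonempty → IsLowerSet L → ∀ x y, x ≠ y →
      Incompat (e α LL L x) (e α LL L y) := fun α LL L h1 h2 => (he α LL L h1 h2).2.1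
  have hinc := treeF_incompat Set.univ e hcl hu hn he1 he2
  have hmem := treeF_mem Set.univ e hcl hu hn he1
  have hcon := treeF_congr Set.univ e
  have hanti := fun s β γ h => treeF_anti Set.univ e hcl hu hn he1 s (β := β) (γ := γ) h
  have hlow := treeL_lower Set.univ e hu
  have hupd : ∀ α s x, treeF Set.univ e α (Function.update s α x) =
      e α (Set.range (treeL Set.univ e α)) (treeL Set.univ e α s) x := by
    intro α s x
    rw [treeF_eq, treeL_congr Set.univ e α (Function.update s α x) s, Function.update_self]
    intro β hβ
    exact Function.update_of_ne hβ.ne _ _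
  -- every condition is compatible with some branch at each level
  have hbr : ∀ α, (∀ β < α, ∀ q, ∃ p ∈ {p | ∃ s, p ≤ treeF Set.univ e β s}, p ≤ q) →
      ∀ q, ∃ s, ∃ p ≤ q, p ∈ treeL Set.univ e α s := by
    intro α hd q
    obtain ⟨p, hpq, hp⟩ := distrib hcl α (fun β => {p | ∃ s, p ≤ treeF Set.univ e β s})
      (fun β _ a b hab ⟨s, hs⟩ => ⟨s, hab.trans hs⟩) hd q
    have hΘne : Nonempty Θ := mk_ne_zero_iff.1 (aleph0_pos.trans hΘ).ne'
    have : ∀ β, ∃ s, β < α → p ≤ treeF Set.univ e β s := by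
      intro β
      by_cases h : β < α
      · obtain ⟨s, hs⟩ := hp β h
        exact ⟨s, fun _ => hs⟩
      · exact ⟨fun _ => hΘne.some, fun h' => absurd h' h⟩
    choose S hS using this
    refine ⟨fun β => S β β, p, hpq, trivial, fun β hβ => ?_⟩
    rw [hcon β (fun γ => S γ γ) (S β)]
    · exact hS β hβ
    · intro γ hγ
      by_contra hne'
      obtain ⟨δ, hδ, h⟩ := hinc (S γ) (S β) γ hne'
      exact h ⟨p, (hS γ (hγ.trans_lt hβ)).trans (hanti _ _ _ hδ),
        (hS β hβ).trans (hanti _ _ _ (hδ.trans hγ))⟩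
  have hdense : ∀ α q, ∃ p ∈ {p | ∃ s, p ≤ treeF Set.univ e α s}, p ≤ q := by
    intro α
    induction α using WellFoundedLT.induction with
    | ind α ih =>
      intro q
      obtain ⟨s, p, hpq, hp⟩ := hbr α ih q
      obtain ⟨x, hx⟩ := (he α (Set.range (treeL Set.univ e α)) _ (hmem α s).1 (hlow α s)).2.2.1 p hp
      obtain ⟨r, hr1, hr2⟩ := not_not.1 hx
      refine ⟨r, ⟨Function.update s α x, ?_⟩, hr1.trans hpq⟩
      rw [hupd]
      exact hr2
  refine ⟨treeF Set.univ e, hcon, hanti, hinc, fun q => ?_⟩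
  obtain ⟨α, hα⟩ := hcov q
  obtain ⟨s, p, hpq, hp⟩ := hbr α (fun β _ => hdense β) q
  obtain ⟨_, ⟨t, rfl⟩, r, hr, hrL, hrq⟩ := hR2 α (Set.range (treeL Set.univ e α))
    (by rintro _ ⟨s, rfl⟩; exact hlow α s) q hα _ ⟨s, rfl⟩ p hp hpq
  obtain ⟨x, hx⟩ := (he α (Set.range (treeL Set.univ e α)) _ (hmem α t).1 (hlow α t)).2.2.2 r hr hrL
  exact ⟨α, Function.update t α x, by rw [hupd]; exact hx.trans hrq⟩

theorem closedK (κ : Cardinal) {Q : Type} [PartialOrder Q]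
    (hclosed : ∀ o : Ordinal, o < κ.ord → ∀ f : o.ToType → Q,
      (∀ i j : o.ToType, i ≤ j → f j ≤ f i) → ∃ q, ∀ i, q ≤ f i)
    (α : κ.ord.ToType) (f : κ.ord.ToType → Q) (hf : ∀ β γ, β ≤ γ → γ < α → f γ ≤ f β) :
    ∃ q, ∀ β < α, q ≤ f β := by
  let o := Ordinal.typein (α := κ.ord.ToType) (· < ·) α
  have ho : o < κ.ord := Ordinal.typein_lt_self α
  let g := Ordinal.principalSegToType ho
  have htop : g.top = α := by
    apply Ordinal.typein_injective (α := κ.ord.ToType) (· < ·)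
    rw [Ordinal.typein_top]
    exact Ordinal.type_toType o
  have hg : ∀ b, b < α ↔ ∃ i, g i = b := by
    intro b
    rw [← htop]
    exact (g.mem_range_iff_rel (b := b)).symm
  obtain ⟨q, hq⟩ := hclosed o ho (fun i => f (g i)) (by
    intro i j hij
    refine hf _ _ ?_ ((hg _).2 ⟨j, rfl⟩)
    exact g.le_iff_le.2 hij)
  refine ⟨q, fun β hβ => ?_⟩
  obtain ⟨i, rfl⟩ := (hg β).1 hβ
  exact hq i

theorem mk_Iio_lt_ord (c : Cardinal) (i : c.ord.ToType) : #(Set.Iio i) < c := by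
  simpa using mk_Iio_lt i

theorem mk_Iic_lt_ord (c : Cardinal) (hc : ℵ₀ ≤ c) (i : c.ord.ToType) : #(Set.Iic i) < c := by
  rw [← Set.Iio_union_right]
  refine (mk_union_le _ _).trans_lt (add_lt_of_lt hc (mk_Iio_lt_ord c i) ?_)
  rw [mk_singleton]
  exact one_lt_aleph0.trans_le hc

end Williams

open Williams in
theorem williams_singular_general (μ : Cardinal) (hμ : aleph0 ≤ μ) (κ : Cardinal)
    (hκ : κ = Order.succ μ)
    (hcf : ((2 : Cardinal) ^ μ).ord.cof = κ)
    (Q : Type) [PartialOrder Q]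
    (hsep : ∀ p q : Q, ¬ q ≤ p → ∃ r, r ≤ q ∧ Incompat r p)
    (hatomless : ∀ p : Q, ∃ q r, q ≤ p ∧ r ≤ p ∧ Incompat q r)
    (hclosed : ∀ o : Ordinal, o < κ.ord → ∀ f : o.ToType → Q,
      (∀ i j : o.ToType, i ≤ j → f j ≤ f i) → ∃ q, ∀ i, q ≤ f i)
    (hsize : #Q ≤ 2 ^ μ) :
    ∃ (D : Set Q) (E : Set (ColLT κ κ.ord.ToType ((2 ^ μ : Cardinal)).ord.ToType)),
      IsDenseSub D ∧ IsDenseSub E ∧ Nonempty (D ≃o E) := by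
  classical
  have hcl := closedK κ hclosed
  have hreg : κ.IsRegular := hκ ▸ isRegular_succ hμ
  have hμκ : μ < κ := hκ ▸ Order.lt_succ μ
  have hθ : ℵ₀ < (2 : Cardinal) ^ μ := hμ.trans_lt (cantor μ)
  have hΘc : #((2 ^ μ : Cardinal)).ord.ToType = 2 ^ μ := mk_ord_toType _
  generalize hΘ : ((2 ^ μ : Cardinal)).ord.ToType = Θ at *
  have hneQ : Nonempty Q := by
    obtain ⟨q, -⟩ := hclosed 0 (by
      rw [Cardinal.lt_ord]
      simpa using hreg.pos) (fun i => (Ordinal.isEmpty_toType_zero.false i).elim)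
      (fun i => (Ordinal.isEmpty_toType_zero.false i).elim)
    exact ⟨q⟩
  have hA : ∀ q : Q, ∃ X : Set Q, #Θ ≤ #X ∧ (∀ x ∈ X, x ≤ q) ∧ X.Pairwise Incompat := by
    intro q
    let α : κ.ord.ToType := Ordinal.ToType.mk ⟨μ.ord, ord_lt_ord.2 hμκ⟩
    obtain ⟨g, hg1, hg2⟩ := bigAntichain hcl hatomless α q
    have hα : #(Set.Iio α) = μ := by
      have h1 : Ordinal.typein (α := κ.ord.ToType) (· < ·) α = μ.ord := by
        exact Ordinal.typein_enum (α := κ.ord.ToType) (· < ·) _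
      have h2 : #(Set.Iio α) = (Ordinal.typein (α := κ.ord.ToType) (· < ·) α).card := rfl
      rw [h2, h1, card_ord]
    have hinj : Function.Injective g := by
      intro x y h
      by_contra hxy
      exact hg2 x y hxy ⟨g x, le_rfl, h.le⟩
    refine ⟨Set.range g, ?_, ?_, ?_⟩
    · rw [mk_range_eq g hinj, hΘc]
      simp [hα]
    · rintro _ ⟨x, rfl⟩
      exact hg1 x
    · rintro _ ⟨x, rfl⟩ _ ⟨y, rfl⟩ h
      exact hg2 x y fun h' => h (by rw [h'])
  obtain ⟨Qs, hQs, hcov⟩ : ∃ Qs : κ.ord.ToType → Set Q, (∀ α, #(Qs α) < #Θ) ∧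
      ∀ q, ∃ α, q ∈ Qs α := by
    rw [hΘc]
    rw [← mk_ord_toType (2 ^ μ)] at hsize
    obtain ⟨ι⟩ := hsize
    obtain ⟨S, hS, hSc⟩ := Order.exists_cof_eq ((2 ^ μ : Cardinal).ord.ToType)
    rw [Ordinal.cof_toType, hcf, ← mk_ord_toType κ] at hSc
    obtain ⟨c⟩ := Cardinal.eq.1 hSc
    refine ⟨fun α => ι ⁻¹' Set.Iic (c.symm α).1, fun α => ?_, fun q => ?_⟩
    · exact (mk_preimage_of_injective _ _ ι.injective).trans_lt (mk_Iic_lt_ord _ hθ.le _)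
    · obtain ⟨b, hb, h⟩ := hS (ι q)
      refine ⟨c ⟨b, hb⟩, ?_⟩
      simpa using h
  obtain ⟨F, hcon, hanti, hinc, hdense⟩ := core hcl hneQ (hΘc ▸ hθ) (hΘc ▸ hsize) hA Qs hQs hcov
  have hnt : Nontrivial Θ := by
    rw [← one_lt_iff_nontrivial, hΘc]
    exact one_lt_aleph0.trans hθ
  obtain ⟨d⟩ : Nonempty Θ := inferInstance
  let E : Set (ColLT κ κ.ord.ToType Θ) := {f | ∃ α, ∀ a, f.1 a ≠ none ↔ a ≤ α}
  choose lev hlev using fun f : E => f.2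
  let sq : E → κ.ord.ToType → Θ := fun f a => (f.1.1 a).getD d
  have hsq : ∀ f a, a ≤ lev f → f.1.1 a = some (sq f a) := by
    intro f a ha
    obtain ⟨x, hx⟩ := Option.ne_none_iff_exists'.1 ((hlev f a).2 ha)
    simp [sq, hx]
  -- building elements of E
  have hmk : ∀ (α : κ.ord.ToType) (s : κ.ord.ToType → Θ), ∃ f : E, lev f = α ∧
      ∀ a ≤ α, sq f a = s a := by
    intro α s
    have hcard : #{a | (fun a => if a ≤ α then some (s a) else none) a ≠ none} < κ := by
      refine (mk_le_mk_of_subset ?_).trans_lt (mk_Iic_lt_ord κ hreg.aleph0_le α)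
      intro a ha
      by_contra h
      exact ha (if_neg h)
    have hmem : ∀ a, (if a ≤ α then some (s a) else none) ≠ none ↔ a ≤ α := by
      intro a
      by_cases h : a ≤ α <;> simp [h]
    let f : E := ⟨⟨fun a => if a ≤ α then some (s a) else none, hcard⟩, α, hmem⟩
    refine ⟨f, ?_, fun a ha => ?_⟩
    · have h : ∀ a, a ≤ α ↔ a ≤ lev f := fun a => (hmem a).symm.trans (hlev f a)
      exact le_antisymm ((h _).2 le_rfl) ((h _).1 le_rfl)
    · simp [sq, f, ha]
  have hcompat : ∀ f g : E, (∃ r, r ≤ F (lev f) (sq f) ∧ r ≤ F (lev g) (sq g)) →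
      ∀ a, a ≤ lev f → a ≤ lev g → sq f a = sq g a := by
    rintro f g ⟨r, hr1, hr2⟩ a haf hag
    by_contra h
    obtain ⟨γ, hγ, hi⟩ := hinc _ _ a h
    exact hi ⟨r, hr1.trans (hanti _ _ _ (hγ.trans haf)), hr2.trans (hanti _ _ _ (hγ.trans hag))⟩
  let Φ : E ↪o Q := OrderEmbedding.ofMapLEIff (fun f => F (lev f) (sq f)) (by
    intro f g
    constructor
    · intro hfg
      have hag := hcompat f g ⟨_, le_rfl, hfg⟩
      rcases le_or_gt (lev g) (lev f) with hl | hl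
      · intro a ha
        have ha' := (hlev g a).1 ha
        rw [hsq f a (ha'.trans hl), hsq g a ha', hag a (ha'.trans hl) ha']
      · exfalso
        obtain ⟨x, hx⟩ := exists_ne (sq g (lev g))
        let t := Function.update (sq g) (lev g) x
        have h1 : F (lev f) t = F (lev f) (sq f) := by
          apply hcon
          intro β hβ
          rw [hag β hβ (hβ.trans hl.le)]
          exact Function.update_of_ne (hβ.trans_lt hl).ne _ _
        have h2 : F (lev g) t ≤ F (lev g) (sq g) :=
          (hanti t _ _ hl.le).trans (h1.le.trans hfg)
        obtain ⟨γ, hγ, hi⟩ := hinc t (sq g) (lev g) (by simpa [t] using hx)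
        exact hi ⟨_, hanti t _ _ hγ, h2.trans (hanti _ _ _ hγ)⟩
    · intro hfg
      have hs : ∀ a ≤ lev g, f.1.1 a = g.1.1 a := fun a ha => hfg a ((hlev g a).2 ha)
      have hl : lev g ≤ lev f := by
        rw [← hlev f, hs _ le_rfl]
        exact (hlev g _).2 le_rfl
      have : F (lev g) (sq f) = F (lev g) (sq g) := by
        apply hcon
        intro β hβ
        simp only [sq]
        rw [hs β hβ]
      exact (hanti _ _ _ hl).trans this.le)
  refine ⟨Set.range Φ, E, ?_, ?_, ⟨Φ.orderIso.symm⟩⟩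
  · intro q
    obtain ⟨α, s, h⟩ := hdense q
    obtain ⟨f, hf, hfs⟩ := hmk α s
    refine ⟨Φ f, ⟨f, rfl⟩, ?_⟩
    change F (lev f) (sq f) ≤ q
    rw [hf, hcon α (sq f) s hfs]
    exact h
  · intro f
    have hb : ∃ α, ∀ a, f.1 a ≠ none → a ≤ α := by
      have hnc : ¬ IsCofinal {a | f.1 a ≠ none} := by
        intro h
        have := Order.cof_le h
        rw [Ordinal.cof_toType, hreg.cof_ord] at this
        exact absurd f.2 this.not_gt
      simp only [IsCofinal, not_forall, not_exists, not_and, not_le] at hnc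
      obtain ⟨α, hα⟩ := hnc
      exact ⟨α, fun a ha => (hα a ha).le⟩
    obtain ⟨α, hα⟩ := hb
    obtain ⟨g, hg, hgs⟩ := hmk α (fun a => (f.1 a).getD d)
    refine ⟨g.1, g.2, fun a ha => ?_⟩
    rw [hsq g a (hg ▸ hα a ha), hgs a (hα a ha)]
    obtain ⟨x, hx⟩ := Option.ne_none_iff_exists'.1 ha
    simp [hx]
end

section
/- Let ⟨i_η : η ∈ 2^{<ω}⟩ be a family of countable ordinals such that i_ν < i_η whenever ν is a proper initial segment of η. Then there exist a countable limit ordinal δ and a function h : 2^{<ω} → 2^{<ω} such that: (i) for every m, all values h(η) for η of length m have the same length; (ii) for every η and every l ∈ {0,1}, h(η) is a proper initial segment of h(η⌢⟨l⟩); (iii) h(η⌢⟨0⟩) ≠ h(η⌢⟨1⟩) for every η; and (iv) for every x : ℕ → {0,1}, sup_{n<ω} i_{h(x↾n)} = δ. -/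
open Cardinal

/-- Initial segment of length `n`. -/
def pscR (x : ℕ → Bool) (n : ℕ) : List Bool := List.ofFn fun k : Fin n => x k

theorem pscR_length (x : ℕ → Bool) (n : ℕ) : (pscR x n).length = n := by simp [pscR]

theorem pscR_succ (x : ℕ → Bool) (n : ℕ) : pscR x (n + 1) = pscR x n ++ [x n] := by
  unfold pscR
  rw [List.ofFn_succ_last]
  simp

theorem pscR_prefix (x : ℕ → Bool) {n m : ℕ} (h : n ≤ m) : pscR x n <+: pscR x m := by
  induction m, h using Nat.le_induction with
  | base => exact List.prefix_rfl
  | succ k _ ih => exact ih.trans (by rw [pscR_succ]; exact List.prefix_append _ _)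

theorem pscR_ne {x y : ℕ → Bool} {k n : ℕ} (h : x k ≠ y k) (hn : k < n) : pscR x n ≠ pscR y n := by
  intro he
  have := List.ofFn_injective he
  exact h (congrFun this ⟨k, hn⟩)

theorem psc_tree (T : List Bool → Prop) (P : ℕ → List Bool → Prop) (h0 : T [])
    (step : ∀ s m, T s → ∃ B, ∀ n, B ≤ n → ∃ e : Bool → List Bool, e false ≠ e true ∧
      ∀ l, s <+: e l ∧ (e l).length = n ∧ T (e l) ∧ P m (e l)) :
    ∃ h : List Bool → List Bool,
      (∀ (m : ℕ) (η η' : List Bool), η.length = m → η'.length = m →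
        (h η).length = (h η').length) ∧
      (∀ (η : List Bool) (l : Bool), h η <+: h (η ++ [l]) ∧ h η ≠ h (η ++ [l])) ∧
      (∀ η : List Bool, h (η ++ [false]) ≠ h (η ++ [true])) ∧
      (∀ η, T (h η)) ∧ (∀ η l, P η.length (h (η ++ [l]))) := by
  classical
  have step' : ∀ s m, ∃ B, ∀ n, B ≤ n → T s → ∃ e : Bool → List Bool, e false ≠ e true ∧
      ∀ l, s <+: e l ∧ (e l).length = n ∧ T (e l) ∧ P m (e l) := by
    intro s m
    by_cases hs : T s
    · obtain ⟨B, hB⟩ := step s m hs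
      exact ⟨B, fun n hn _ => hB n hn⟩
    · exact ⟨0, fun n _ h => absurd h hs⟩
  choose B hB using step'
  let N : ℕ → ℕ := fun m => Nat.rec 0 (fun m r =>
    max (r + 1) (Finset.univ.sup fun v : Fin r → Bool => B (List.ofFn v) m)) m
  have hN1 : ∀ m, N m < N (m + 1) := fun m => lt_of_lt_of_le (Nat.lt_succ_self _) (le_max_left _ _)
  have hN2 : ∀ m s, s.length = N m → B s m ≤ N (m + 1) := by
    intro m s hs
    refine le_trans ?_ (le_max_right _ _)
    have : ∀ r, s.length = r → B s m ≤ (Finset.univ.sup fun v : Fin r → Bool => B (List.ofFn v) m) := by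
      rintro r rfl
      have := Finset.le_sup (f := fun v : Fin s.length → Bool => B (List.ofFn v) m)
        (Finset.mem_univ s.get)
      simpa using this
    exact this _ hs
  have key : ∀ (s : List Bool) (m : ℕ), ∃ e : Bool → List Bool, T s → s.length = N m → e false ≠ e true ∧
      ∀ l, s <+: e l ∧ (e l).length = N (m + 1) ∧ T (e l) ∧ P m (e l) := by
    intro s m
    rcases Classical.em (T s ∧ s.length = N m) with hs | hs
    · obtain ⟨e, he⟩ := hB s m (N (m + 1)) (hN2 m s hs.2) hs.1
      exact ⟨e, fun _ _ => he⟩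
    · exact ⟨fun _ => [], fun h1 h2 => absurd ⟨h1, h2⟩ hs⟩
  choose e he using key
  let g : List Bool → List Bool := fun t => List.rec [] (fun l t r => e r t.length l) t
  have hg : ∀ l t, g (l :: t) = e (g t) t.length l := fun _ _ => rfl
  have inv : ∀ t, T (g t) ∧ (g t).length = N t.length := by
    intro t
    induction t with
    | nil => exact ⟨h0, rfl⟩
    | cons l t ih =>
      have := (he _ _ ih.1 ih.2).2 l
      rw [hg]
      exact ⟨this.2.2.1, this.2.1⟩
  have hgs : ∀ t, _ := fun t => he (g t) t.length (inv t).1 (inv t).2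
  refine ⟨fun η => g η.reverse, ?_, ?_, ?_, fun η => (inv _).1, ?_⟩
  · intro m η η' h h'
    rw [(inv _).2, (inv _).2]
    simp [h, h']
  · intro η l
    simp only [List.reverse_append, List.reverse_singleton, List.singleton_append, hg]
    have := (hgs η.reverse).2 l
    refine ⟨this.1, fun hh => ?_⟩
    have h1 := this.2.1
    rw [← hh, (inv _).2] at h1
    exact absurd h1 (hN1 _).ne
  · intro η
    simp only [List.reverse_append, List.reverse_singleton, List.singleton_append, hg]
    exact (hgs η.reverse).1
  · intro η l
    simp only [List.reverse_append, List.reverse_singleton, List.singleton_append, hg]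
    have := ((hgs η.reverse).2 l).2.2.2
    simpa using this

/-- The set of condensation points of an uncountable set. -/
theorem psc_cond (U : Set (ℕ → Bool)) (hU : ¬ U.Countable) :
    ∃ W ⊆ U, W.Nonempty ∧ ∀ x ∈ W, ∀ n, ∃ y ∈ W, pscR y n = pscR x n ∧ y ≠ x := by
  let V : List Bool → Set (ℕ → Bool) := fun s => {x ∈ U | pscR x s.length = s}
  let Z : Set (ℕ → Bool) := ⋃ s ∈ {s | (V s).Countable}, V s
  have hZ : Z.Countable := (Set.to_countable _).biUnion fun s hs => hs
  have hunc : ∀ A : Set (ℕ → Bool), ¬ A.Countable → ¬ (A \ Z).Countable := by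
    intro A hA h
    exact hA ((h.union hZ).mono (by intro x hx; by_cases h : x ∈ Z <;> simp [h, hx]))
  refine ⟨U \ Z, Set.sdiff_subset, ?_, ?_⟩
  · by_contra h
    rw [Set.not_nonempty_iff_eq_empty] at h
    exact hunc U hU (by simp [h])
  · intro x hx n
    have h1 : ¬ (V (pscR x n)).Countable := by
      intro h
      apply hx.2
      simp only [Z, Set.mem_iUnion]
      exact ⟨pscR x n, h, hx.1, by rw [pscR_length]⟩
    have h2 := hunc _ h1
    by_contra hcon
    push Not at hcon
    apply h2
    refine (Set.countable_singleton x).mono ?_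
    rintro y ⟨⟨hyU, hy⟩, hyZ⟩
    rw [pscR_length] at hy
    exact hcon y ⟨hyU, hyZ⟩ hy

theorem psc_Iio (o : Ordinal) (h : o < (aleph 1).ord) : (Set.Iio o).Countable := by
  rw [← Cardinal.le_aleph0_iff_set_countable, Cardinal.mk_Iio_ordinal, Cardinal.lift_le_aleph0]
  rw [Cardinal.lt_ord] at h
  rwa [← Order.lt_succ_iff, Cardinal.succ_aleph0]

theorem perfect_subtree_constant_sup (ia : List Bool → Ordinal)
    (hlt : ∀ η : List Bool, ia η < (aleph 1).ord)
    (hmono : ∀ ν η : List Bool, ν <+: η → ν ≠ η → ia ν < ia η) :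
    ∃ (δ : Ordinal) (h : List Bool → List Bool),
      δ < (aleph 1).ord ∧ Order.IsSuccLimit δ ∧
      (∀ (m : ℕ) (η η' : List Bool), η.length = m → η'.length = m →
        (h η).length = (h η').length) ∧
      (∀ (η : List Bool) (l : Bool), h η <+: h (η ++ [l]) ∧ h η ≠ h (η ++ [l])) ∧
      (∀ η : List Bool, h (η ++ [false]) ≠ h (η ++ [true])) ∧
      (∀ x : ℕ → Bool, (⨆ n : ℕ, ia (h (List.ofFn fun k : Fin n => x k))) = δ) := by
  let f : (ℕ → Bool) → Ordinal := fun x => ⨆ n, ia (pscR x n)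
  have hle : ∀ x n, ia (pscR x n) ≤ f x := fun x n => Ordinal.le_iSup (fun n => ia (pscR x n)) n
  have hlt' : ∀ x n, ia (pscR x n) < f x := fun x n =>
    lt_of_lt_of_le (hmono _ _ (pscR_prefix x (Nat.le_succ n)) (fun h => by
      have := congrArg List.length h
      simp [pscR_length] at this)) (hle x (n + 1))
  have hmon : ∀ ν η : List Bool, ν <+: η → ia ν ≤ ia η := by
    intro ν η h
    by_cases he : ν = η
    · rw [he]
    · exact (hmono _ _ h he).le
  have hbig : (⨆ η, ia η) < (aleph 1).ord := by
    simpa using Ordinal.iSup_lt_omega_one (f := ia) (by simpa using hlt)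
  have hfb : ∀ x, f x ≤ ⨆ η, ia η := fun x => Ordinal.iSup_le fun n => Ordinal.le_iSup ia _
  -- an uncountable fibre
  obtain ⟨δ, hδ⟩ : ∃ δ, ¬ {x | f x = δ}.Countable := by
    by_contra! hcon
    have hc : (Set.Iic (⨆ η, ia η)).Countable := by
      rw [← Set.Iio_insert]
      exact (psc_Iio _ hbig).insert _
    have : (Set.univ : Set (ℕ → Bool)).Countable := by
      refine (hc.biUnion fun δ _ => hcon δ).mono ?_
      intro x _
      simp only [Set.mem_iUnion]
      exact ⟨f x, hfb x, rfl⟩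
    have hu : Uncountable (ℕ → Bool) := by
      rw [← Cardinal.aleph0_lt_mk_iff]
      simpa using Cardinal.cantor ℵ₀
    exact Set.not_countable_univ this
  obtain ⟨W, hWU, ⟨x0, hx0⟩, hW⟩ := psc_cond _ hδ
  have hWf : ∀ x ∈ W, f x = δ := fun x hx => hWU hx
  obtain ⟨h, h1, h2, h3, h4, h5⟩ := psc_tree (fun s => ∃ x ∈ W, ∃ n, s = pscR x n)
    (fun m s => ia (pscR x0 m) ≤ ia s) ⟨x0, hx0, 0, by simp [pscR]⟩ (by
      rintro s m ⟨x, hx, k, rfl⟩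
      obtain ⟨y, hy, hyx, hne⟩ := hW x hx k
      obtain ⟨j, hj⟩ := Function.ne_iff.1 hne
      have ex : ∀ z ∈ W, ∃ n, ia (pscR x0 m) < ia (pscR z n) := by
        intro z hz
        have := hlt' x0 m
        rw [hWf x0 hx0, ← hWf z hz] at this
        exact Ordinal.lt_iSup_iff.1 this
      obtain ⟨a, ha⟩ := ex x hx
      obtain ⟨b, hb⟩ := ex y hy
      refine ⟨k + (j + 1) + a + b, fun n hn => ⟨fun l => cond l (pscR x n) (pscR y n),
        pscR_ne hj (by omega), ?_⟩⟩
      rintro (_ | _)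
      · exact ⟨hyx ▸ pscR_prefix y (by omega), pscR_length _ _, ⟨y, hy, n, rfl⟩,
          hb.le.trans (hmon _ _ (pscR_prefix y (by omega)))⟩
      · exact ⟨pscR_prefix x (by omega), pscR_length _ _, ⟨x, hx, n, rfl⟩,
          ha.le.trans (hmon _ _ (pscR_prefix x (by omega)))⟩)
  refine ⟨δ, h, ?_, ?_, h1, h2, h3, ?_⟩
  · rw [← hWf x0 hx0]
    exact (hfb x0).trans_lt hbig
  · rw [← hWf x0 hx0, Ordinal.isSuccLimit_iff, Order.isSuccPrelimit_iff_succ_lt]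
    refine ⟨(lt_of_le_of_lt zero_le (hlt' x0 0)).ne', fun c hc => ?_⟩
    obtain ⟨n, hn⟩ := Ordinal.lt_iSup_iff.1 hc
    exact (Order.succ_le_of_lt hn).trans_lt (hlt' x0 n)
  · intro x
    change (⨆ n : ℕ, ia (h (pscR x n))) = δ
    apply le_antisymm
    · refine Ordinal.iSup_le fun n => ?_
      obtain ⟨z, hz, k, hk⟩ := h4 (pscR x n)
      rw [hk, ← hWf z hz]
      exact hle z k
    · rw [← hWf x0 hx0]
      refine Ordinal.iSup_le fun n => ?_
      have := h5 (pscR x n) (x n)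
      rw [pscR_length, ← pscR_succ] at this
      exact this.trans (Ordinal.le_iSup (fun n => ia (h (pscR x n))) (n + 1))
end

section
/- Assume cf(2^ℵ₀) = ℵ₁. Let Q be a separative, atomless, countably closed partial order with |Q| ≤ 2^ℵ₀. Then there exists a family ⟨I_i : i < ω₁⟩ of maximal antichains of Q whose union ⋃_{i<ω₁} I_i is a dense subset of Q. -/
open Cardinal

/-- A maximal antichain: pairwise incompatible, and every element of `Q` is
compatible with some member. -/
def IsMaximalAntichain {Q : Type} [PartialOrder Q] (A : Set Q) : Prop :=
  (A.Pairwise fun p q => Incompat p q) ∧ ∀ p : Q, ∃ a ∈ A, ¬ Incompat p a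


theorem aux_incompat_mono {Q : Type} [PartialOrder Q] {a b c d : Q} (h : Incompat a b)
    (hc : c ≤ a) (hd : d ≤ b) : Incompat c d := by
  rintro ⟨r, h1, h2⟩
  exact h ⟨r, h1.trans hc, h2.trans hd⟩

theorem aux_incompat_symm {Q : Type} [PartialOrder Q] {a b : Q} (h : Incompat a b) :
    Incompat b a := by
  rintro ⟨r, h1, h2⟩
  exact h ⟨r, h2, h1⟩

/-- Below every element there is an antichain indexed by Cantor space. -/
theorem aux_tree {Q : Type} [PartialOrder Q]
    (hatomless : ∀ p : Q, ∃ q r, q ≤ p ∧ r ≤ p ∧ Incompat q r)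
    (hclosed : ∀ f : ℕ → Q, (∀ n, f (n + 1) ≤ f n) → ∃ q, ∀ n, q ≤ f n) (p : Q) :
    ∃ g : (ℕ → Bool) → Q, (∀ x, g x ≤ p) ∧ ∀ x y, x ≠ y → Incompat (g x) (g y) := by
  choose l r hl hr hlr using hatomless
  let s : (ℕ → Bool) → ℕ → Q := fun x n =>
    Nat.rec p (fun n q => if x n = true then l q else r q) n
  have s0 : ∀ x, s x 0 = p := fun x => rfl
  have sS : ∀ x n, s x (n + 1) = if x n = true then l (s x n) else r (s x n) := fun x n => rfl
  have hdec : ∀ x n, s x (n + 1) ≤ s x n := by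
    intro x n
    rw [sS]
    split_ifs
    · exact hl _
    · exact hr _
  choose g hg using fun x => hclosed (s x) (hdec x)
  refine ⟨g, fun x => hg x 0, ?_⟩
  intro x y hxy
  have hex : ∃ n, x n ≠ y n := Function.ne_iff.mp hxy
  classical
  let n := Nat.find hex
  have hn : x n ≠ y n := Nat.find_spec hex
  have heq : ∀ m, m ≤ n → s x m = s y m := by
    intro m
    induction m with
    | zero => intro _; rfl
    | succ m ih =>
      intro hm
      have h1 : x m = y m := by
        by_contra h
        exact Nat.find_min hex (m := m) hm h
      rw [sS, sS, ih (by omega), h1]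
  have hx := hg x (n + 1)
  have hy := hg y (n + 1)
  rw [sS] at hx hy
  rw [← heq n le_rfl] at hy
  cases h1 : x n <;> cases h2 : y n <;> simp [h1, h2] at hn hx hy
  · exact aux_incompat_symm (aux_incompat_mono (hlr _) hy hx)
  · exact aux_incompat_mono (hlr _) hx hy

/-- Injective choice from large sets. -/
theorem aux_choice {ι X : Type} [LinearOrder ι] [WellFoundedLT ι] (B : ι → Set X)
    (hB : ∀ i, #ι < #(B i)) : ∃ h : ι → X, (∀ i, h i ∈ B i) ∧ Function.Injective h := by
  have key : ∀ i (g : ∀ j, j < i → X), ∃ x, x ∈ B i ∧ ∀ j hj, x ≠ g j hj := by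
    intro i g
    by_contra hcon
    push Not at hcon
    have hsub : B i ⊆ Set.range (fun j : {j // j < i} => g j.1 j.2) := by
      intro x hx
      obtain ⟨j, hj, e⟩ := hcon x hx
      exact ⟨⟨j, hj⟩, e.symm⟩
    exact absurd (hB i) (not_lt.mpr
      (((mk_le_mk_of_subset hsub).trans mk_range_le).trans (mk_subtype_le _)))
  choose F hF1 hF2 using key
  let h : ι → X := (wellFounded_lt (α := ι)).fix F
  have hh : ∀ i, h i = F i (fun j _ => h j) := fun i => WellFounded.fix_eq _ _ _
  have hne : ∀ i j, j < i → h i ≠ h j := by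
    intro i j hj
    rw [hh i]
    exact hF2 i (fun j _ => h j) j hj
  refine ⟨h, fun i => by rw [hh i]; exact hF1 _ _, ?_⟩
  intro i j e
  rcases lt_trichotomy i j with hij | hij | hij
  · exact absurd e.symm (hne _ _ hij)
  · exact hij
  · exact absurd e (hne _ _ hij)

/-- Disjoint refinement of fewer than continuum many elements. -/
theorem aux_refine {Q ι : Type} [PartialOrder Q] [LinearOrder ι] [WellFoundedLT ι]
    (p : ι → Q) (A : ι → (ℕ → Bool) → Q) (hA : ∀ i x, A i x ≤ p i)
    (hA2 : ∀ i x y, x ≠ y → Incompat (A i x) (A i y))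
    (μ : Cardinal.{0}) (h0 : ℵ₀ ≤ μ) (hι : #ι ≤ μ) (hμ : μ < 2 ^ ℵ₀) :
    ∃ r : ι → Q, (∀ i, r i ≤ p i) ∧ ∀ i j, i ≠ j → Incompat (r i) (r j) := by
  let C : ι → ι → Set (ℕ → Bool) := fun b a => {x | ¬ Incompat (A b x) (p a)}
  let K : ι → Prop := (wellFounded_lt (α := ι)).fix
    (fun a K => ∀ b (hb : b < a), K b hb → #(C b a) ≤ μ)
  have hK : ∀ a, K a = ∀ b, b < a → K b → #(C b a) ≤ μ := fun a => WellFounded.fix_eq _ _ _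
  have hf : ∀ a, ∃ b, K b ∧ μ < #(C b a) := by
    intro a
    by_cases h : K a
    · refine ⟨a, h, ?_⟩
      have : C a a = Set.univ := by
        ext x
        simp only [C, Set.mem_ofPred_eq, Set.mem_univ, iff_true]
        exact fun h => h ⟨A a x, le_rfl, hA a x⟩
      rw [this, mk_univ]
      simpa using hμ
    · rw [hK] at h
      push Not at h
      obtain ⟨b, _, hb, hb'⟩ := h
      exact ⟨b, hb, hb'⟩
  choose f hfK hfC using hf
  let R : ι → Set (ℕ → Bool) := fun b => ⋃ c : {c // b < c ∧ K c}, C b c.1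
  have hR : ∀ b, K b → #(R b) ≤ μ := by
    intro b hb
    refine (mk_iUnion_le_sum_mk).trans ?_
    refine (sum_le_sum _ (fun _ => μ) ?_).trans ?_
    · rintro ⟨c, hc, hc'⟩
      rw [hK] at hc'
      exact hc' b hc hb
    · rw [sum_const']
      exact (mul_le_mul_left ((mk_subtype_le _).trans hι) _).trans (mul_eq_self h0).le
  have hB : ∀ a, #ι < #((C (f a) a \ R (f a) : Set (ℕ → Bool))) := by
    intro a
    by_contra hcon
    have h1 : #((C (f a) a \ R (f a) : Set (ℕ → Bool))) ≤ μ := (not_lt.mp hcon).trans hι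
    have h2 : C (f a) a ⊆ (C (f a) a \ R (f a)) ∪ R (f a) := by
      intro x hx
      by_cases h : x ∈ R (f a)
      · exact Or.inr h
      · exact Or.inl ⟨hx, h⟩
    have h3 := ((mk_le_mk_of_subset h2).trans (mk_union_le _ _)).trans
      (add_le_add h1 (hR _ (hfK a)))
    rw [add_eq_self h0] at h3
    exact absurd (hfC a) (not_lt.mpr h3)
  obtain ⟨h, hh, hinj⟩ := aux_choice _ hB
  have hr : ∀ a, ∃ r, r ≤ A (f a) (h a) ∧ r ≤ p a := fun a => not_not.mp (hh a).1
  choose r hr1 hr2 using hr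
  have hlt : ∀ a b, f a < f b → Incompat (r a) (r b) := by
    intro a b hab
    have h1 : Incompat (A (f a) (h a)) (p (f b)) := by
      by_contra hc
      exact (hh a).2 (Set.mem_iUnion.mpr ⟨⟨f b, hab, hfK b⟩, hc⟩)
    exact aux_incompat_mono h1 (hr1 a) ((hr1 b).trans (hA _ _))
  refine ⟨r, hr2, ?_⟩
  intro a b hab
  rcases lt_trichotomy (f a) (f b) with hl | he | hl
  · exact hlt _ _ hl
  · have h1 := hr1 b
    rw [← he] at h1
    exact aux_incompat_mono (hA2 (f a) _ _ (hinj.ne hab)) (hr1 a) h1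
  · exact aux_incompat_symm (hlt _ _ hl)

/-- Every antichain extends to a maximal one. -/
theorem aux_extend {Q : Type} [PartialOrder Q] (S : Set Q)
    (hS : S.Pairwise fun p q => Incompat p q) : ∃ M, S ⊆ M ∧ IsMaximalAntichain M := by
  obtain ⟨M, hSM, hM⟩ := zorn_subset_nonempty {T : Set Q | T.Pairwise fun p q => Incompat p q}
    (by
      intro c hc hchain _
      refine ⟨⋃₀ c, ?_, fun s hs => Set.subset_sUnion_of_mem hs⟩
      exact (Set.pairwise_sUnion hchain.directedOn).mpr fun s hs => hc hs) S hS
  refine ⟨M, hSM, hM.prop, ?_⟩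
  intro p
  by_contra hcon
  push Not at hcon
  have h1 : insert p M ∈ {T : Set Q | T.Pairwise fun p q => Incompat p q} :=
    hM.prop.insert fun b hb _ => ⟨hcon b hb, aux_incompat_symm (hcon b hb)⟩
  have h2 : p ∈ M := hM.le_of_ge h1 (Set.subset_insert _ _) (Set.mem_insert _ _)
  exact hcon p h2 ⟨p, le_rfl, le_rfl⟩

universe u

/-- The cofinality hypothesis does not depend on the universe. -/
theorem aux_cf (h : ((2 : Cardinal.{u}) ^ aleph0.{u}).ord.cof = aleph 1) :
    ((2 : Cardinal.{0}) ^ aleph0.{0}).ord.cof = aleph 1 := by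
  apply lift_injective.{u, 0}
  rw [Ordinal.lift_cof, lift_ord, lift_power, lift_two, lift_aleph0, lift_aleph, Ordinal.lift_one]
  exact h

/-- The index set does not depend on the universe. -/
theorem aux_equiv : Nonempty ((aleph.{u} 1).ord.ToType ≃ (aleph.{0} 1).ord.ToType) := by
  apply lift_mk_eq'.mp
  rw [mk_ord_toType, mk_ord_toType]
  simp

/-- Lemma 2.5.  Assume `cf(2^ℵ₀) = ℵ₁`.  If `Q` is a
separative, atomless, countably closed partial order of size `≤ 2^ℵ₀`, then
there is a family `⟨I_i : i < ω₁⟩` of maximal antichains of `Q` whose union is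
dense in `Q`. -/
theorem dense_union_of_omega1_antichains (Q : Type) [PartialOrder Q]
    (hcf : ((2 : Cardinal) ^ aleph0).ord.cof = aleph 1)
    (hsep : ∀ p q : Q, ¬ q ≤ p → ∃ r, r ≤ q ∧ Incompat r p)
    (hatomless : ∀ p : Q, ∃ q r, q ≤ p ∧ r ≤ p ∧ Incompat q r)
    (hclosed : ∀ f : ℕ → Q, (∀ n, f (n + 1) ≤ f n) → ∃ q, ∀ n, q ≤ f n)
    (hsize : #Q ≤ 2 ^ aleph0) :
    ∃ I : (aleph 1).ord.ToType → Set Q,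
      (∀ i, IsMaximalAntichain (I i)) ∧ IsDenseSub (⋃ i, I i) := by
  have hcf0 := aux_cf hcf
  have hcover : ∃ S : (aleph.{0} 1).ord.ToType → Set Q,
      (∀ i, #(S i) < 2 ^ aleph0) ∧ ∀ q, ∃ i, q ∈ S i := by
    obtain ⟨c, hc, hc'⟩ := Order.exists_cof_eq ((2 : Cardinal.{0}) ^ aleph0.{0}).ord.ToType
    have hcard : #c = #(aleph.{0} 1).ord.ToType := by
      rw [hc', Ordinal.cof_toType, hcf0, mk_ord_toType]
    obtain ⟨e⟩ := Cardinal.eq.mp hcard.symm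
    have hQ : #Q ≤ #((2 : Cardinal.{0}) ^ aleph0.{0}).ord.ToType := by
      rw [mk_ord_toType]
      exact hsize
    obtain ⟨g⟩ := hQ
    refine ⟨fun i => g ⁻¹' Set.Iic (e i : ((2 : Cardinal.{0}) ^ aleph0.{0}).ord.ToType), ?_, ?_⟩
    · intro i
      refine (mk_preimage_of_injective _ _ g.injective).trans_lt ?_
      rw [← Set.Iio_insert]
      refine (mk_insert_le).trans_lt ?_
      exact add_lt_of_lt (cantor _).le (mk_Iio_toType_ord_lt _)
        (one_lt_aleph0.trans (cantor _))
    · intro q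
      obtain ⟨b, hb, hqb⟩ := hc (g q)
      refine ⟨e.symm ⟨b, hb⟩, ?_⟩
      rw [Set.mem_preimage, Equiv.apply_symm_apply]
      exact hqb
  obtain ⟨S, hS, hScov⟩ := hcover
  choose A hA hA2 using aux_tree hatomless hclosed
  have hI : ∀ i, ∃ M : Set Q, IsMaximalAntichain M ∧ ∀ q ∈ S i, ∃ a ∈ M, a ≤ q := by
    intro i
    obtain ⟨_, _⟩ := exists_wellFoundedLT (S i)
    obtain ⟨r, hr, hr'⟩ := aux_refine (fun s : S i => (s : Q)) (fun s => A s)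
      (fun s => hA s) (fun s => hA2 s) (max ℵ₀ #(S i)) (le_max_left _ _) (le_max_right _ _)
      (max_lt (cantor _) (hS i))
    obtain ⟨M, hM, hM'⟩ := aux_extend (Set.range r) (by
      rintro _ ⟨a, rfl⟩ _ ⟨b, rfl⟩ hab
      exact hr' a b (fun h => hab (by rw [h])))
    exact ⟨M, hM', fun q hq => ⟨r ⟨q, hq⟩, hM ⟨_, rfl⟩, hr _⟩⟩
  choose I hI1 hI2 using hI
  obtain ⟨E⟩ := aux_equiv
  refine ⟨fun j => I (E j), fun j => hI1 (E j), ?_⟩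
  intro p
  obtain ⟨i, hi⟩ := hScov p
  obtain ⟨a, ha, hap⟩ := hI2 i p hi
  exact ⟨a, Set.mem_iUnion.mpr ⟨E.symm i, by rw [Equiv.apply_symm_apply]; exact ha⟩, hap⟩
end

section
/- Let κ be a regular uncountable cardinal, T a tree of height κ, and ⟨b_α : α < κ⟩ an injective enumeration of all cofinal branches of T. For each α < κ let s_α be the <_T-least element of b_α \ ⋃_{β<α} b_β, and let T* = {t ∈ T : there is no α < κ with s_α <_T t and t ∈ b_α}. Then T* contains no cofinal branch; that is, there is no chain in T* containing elements of arbitrarily large height below κ. -/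
open Cardinal

/-- A partial order is a tree order if the set of strict predecessors of every
element is well-ordered by the induced order. -/
def IsTreeOrder (T : Type) [PartialOrder T] : Prop :=
  ∀ t : T, IsWellOrder {s : T // s < t} (· < ·)

/-- The height of a node: the order type of its set of strict predecessors. -/
noncomputable def nodeHeight {T : Type} [PartialOrder T] (htree : IsTreeOrder T) (t : T) :
    Ordinal :=
  @Ordinal.type {s : T // s < t} (· < ·) (htree t)

/-- `T` has height `κ`: every node has height `< κ`, and every ordinal `< κ` is
the height of some node. -/
def HasTreeHeight {T : Type} [PartialOrder T] (htree : IsTreeOrder T) (κ : Cardinal) : Prop :=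
  (∀ t : T, nodeHeight htree t < κ.ord) ∧ ∀ o < κ.ord, ∃ t : T, nodeHeight htree t = o

/-- A cofinal branch: a downward-closed maximal chain containing nodes of
arbitrarily large height below `κ`. -/
def IsCofBranch {T : Type} [PartialOrder T] (htree : IsTreeOrder T) (κ : Cardinal)
    (b : Set T) : Prop :=
  IsMaxChain (· ≤ ·) b ∧ (∀ x ∈ b, ∀ y, y ≤ x → y ∈ b) ∧
    ∀ o < κ.ord, ∃ x ∈ b, o ≤ nodeHeight htree x

theorem nodeHeight_mono {T : Type} [PartialOrder T] (htree : IsTreeOrder T) {x y : T}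
    (h : x ≤ y) : nodeHeight htree x ≤ nodeHeight htree y := by
  unfold nodeHeight
  haveI := htree x
  haveI := htree y
  exact RelEmbedding.ordinal_type_le
    (⟨⟨fun a => ⟨a.1, lt_of_lt_of_le a.2 h⟩, fun a b hab => Subtype.ext (congrArg (fun z => z.1) hab)⟩,
      Iff.rfl⟩ : ((· < ·) : {s : T // s < x} → {s : T // s < x} → Prop) ↪r
        ((· < ·) : {s : T // s < y} → {s : T // s < y} → Prop))

theorem le_total_below {T : Type} [PartialOrder T] (htree : IsTreeOrder T) {x a b : T}
    (ha : a ≤ x) (hb : b ≤ x) : a ≤ b ∨ b ≤ a := by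
  rcases ha.eq_or_lt with rfl | ha
  · exact Or.inr hb
  rcases hb.eq_or_lt with rfl | hb
  · exact Or.inl ha.le
  haveI := htree x
  rcases trichotomous_of ((· < ·) : {s : T // s < x} → {s : T // s < x} → Prop)
    ⟨a, ha⟩ ⟨b, hb⟩ with h | h | h
  · exact Or.inl (le_of_lt h)
  · exact Or.inl (le_of_eq (congrArg (fun z => z.1) h))
  · exact Or.inr (le_of_lt h)

/-- Lemma 4.2(a).  Let `⟨b_α : α < κ⟩` injectively enumerate
all cofinal branches of a tree `T` of height `κ` (κ regular uncountable), let
`s_α` be the `<`-least element of `b_α \ ⋃_{β<α} b_β`, and let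
`T* = {t : ¬∃ α, s_α < t ∈ b_α}`.  Then `T*` contains no chain with elements of
arbitrarily large height below `κ`. -/
theorem starred_tree_has_no_cofinal_branch (T : Type) [PartialOrder T]
    (htree : IsTreeOrder T) (κ : Cardinal)
    (hreg : κ.IsRegular) (hunc : aleph0 < κ)
    (hht : HasTreeHeight htree κ)
    (bseq : κ.ord.ToType → Set T)
    (hinj : Function.Injective bseq)
    (hbr : ∀ α, IsCofBranch htree κ (bseq α))
    (hall : ∀ c : Set T, IsCofBranch htree κ c → ∃ α, bseq α = c)
    (s : κ.ord.ToType → T)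
    (hs₁ : ∀ α, s α ∈ bseq α)
    (hs₂ : ∀ α, ∀ β < α, s α ∉ bseq β)
    (hs₃ : ∀ α, ∀ y ∈ bseq α, (∀ β < α, y ∉ bseq β) → s α ≤ y) :
    ¬ ∃ c : Set T, c ⊆ {t : T | ¬ ∃ α, s α < t ∧ t ∈ bseq α} ∧
        IsChain (· ≤ ·) c ∧ ∀ o < κ.ord, ∃ x ∈ c, o ≤ nodeHeight htree x := by
  rintro ⟨c, hc, hch, hcof⟩
  have hlim : Order.IsSuccLimit κ.ord := Cardinal.isSuccLimit_ord hreg.aleph0_le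
  have hbig : ∀ z : T, ∃ x ∈ c, ¬ x ≤ z := by
    intro z
    obtain ⟨x, hx, hzx⟩ := hcof _ (hlim.succ_lt (hht.1 z))
    exact ⟨x, hx, fun h => absurd (Order.succ_le_iff.1 hzx) (not_lt.2 (nodeHeight_mono htree h))⟩
  have hd : IsCofBranch htree κ {t | ∃ x ∈ c, t ≤ x} := by
    refine ⟨⟨?_, ?_⟩, ?_, ?_⟩
    · rintro a ⟨x, hx, hax⟩ b ⟨y, hy, hby⟩ -
      rcases hch.total hx hy with h | h
      · exact le_total_below htree (hax.trans h) hby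
      · exact le_total_below htree hax (hby.trans h)
    · intro e he hde
      refine Set.Subset.antisymm hde fun z hz => ?_
      obtain ⟨x, hx, hxz⟩ := hbig z
      exact ⟨x, hx, (he.total hz (hde ⟨x, hx, le_rfl⟩)).resolve_right hxz⟩
    · rintro x ⟨w, hw, hxw⟩ y hyx
      exact ⟨w, hw, hyx.trans hxw⟩
    · intro o ho
      obtain ⟨x, hx, h⟩ := hcof o ho
      exact ⟨x, ⟨x, hx, le_rfl⟩, h⟩
  obtain ⟨α, hα⟩ := hall _ hd
  obtain ⟨x, hx, hxs⟩ := hbig (s α)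
  have hxb : x ∈ bseq α := by
    rw [hα]
    exact ⟨x, hx, le_rfl⟩
  have hle : s α ≤ x := ((hbr α).1.1.total (hs₁ α) hxb).resolve_right hxs
  exact hc hx ⟨α, lt_of_le_not_ge hle hxs, hxb⟩
end

section
/- Let κ be a regular uncountable cardinal, T a tree of height κ in which every element has exactly κ-many immediate successors, and ⟨b_α : α < κ⟩ an injective enumeration of all cofinal branches of T. For each α < κ let s_α be the <_T-least element of b_α \ ⋃_{β<α} b_β, and let T* = {t ∈ T : there is no α < κ with s_α <_T t and t ∈ b_α}. Then T* is dense in T with respect to the reversed tree order: for every t ∈ T there exists t′ ∈ T* with t ≤_T t′. -/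
open Cardinal

/-- Lemma 4.2(b).  Under the hypotheses of Lemma 4.2, if in
addition every node of `T` has exactly `κ`-many immediate successors, then `T*`
is dense in `T` for the reversed tree order: every `t ∈ T` has some `t' ∈ T*`
with `t ≤ t'`. -/
theorem starred_tree_is_dense (T : Type) [PartialOrder T]
    (htree : IsTreeOrder T) (κ : Cardinal)
    (hreg : κ.IsRegular) (hunc : aleph0 < κ)
    (hht : HasTreeHeight htree κ)
    (hsucc : ∀ t : T, #{t' : T | t < t' ∧ ∀ s : T, s < t' ↔ s ≤ t} = κ)
    (bseq : κ.ord.ToType → Set T)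
    (hinj : Function.Injective bseq)
    (hbr : ∀ α, IsCofBranch htree κ (bseq α))
    (hall : ∀ c : Set T, IsCofBranch htree κ c → ∃ α, bseq α = c)
    (s : κ.ord.ToType → T)
    (hs₁ : ∀ α, s α ∈ bseq α)
    (hs₂ : ∀ α, ∀ β < α, s α ∉ bseq β)
    (hs₃ : ∀ α, ∀ y ∈ bseq α, (∀ β < α, y ∉ bseq β) → s α ≤ y) :
    ∀ t : T, ∃ t' ∈ {t : T | ¬ ∃ α, s α < t ∧ t ∈ bseq α}, t ≤ t' := by
  intro t
  by_contra hcon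
  have hcon' : ∀ u : T, t ≤ u → ∃ α, s α < u ∧ u ∈ bseq α := by
    intro u hu
    by_contra h
    exact hcon ⟨u, h, hu⟩
  have hone : 1 < #{t' : T | t < t' ∧ ∀ s : T, s < t' ↔ s ≤ t} := by
    rw [hsucc t]
    exact lt_trans one_lt_aleph0 hunc
  rw [Cardinal.one_lt_iff_nontrivial] at hone
  obtain ⟨⟨u, hu, hu'⟩, ⟨v, hv, hv'⟩, huv⟩ := hone
  have huv : u ≠ v := fun h => huv (Subtype.ext h)
  obtain ⟨α, hα, huα⟩ := hcon' u hu.le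
  obtain ⟨β, hβ, hvβ⟩ := hcon' v hv.le
  have h1 := (hu' _).1 hα
  have h2 := (hv' _).1 hβ
  rcases lt_trichotomy α β with h | h | h
  · exact hs₂ β α h ((hbr α).2.1 u huα _ (h2.trans hu.le))
  · subst h
    rcases (hbr α).1.1 huα hvβ huv with h | h
    · exact absurd ((hv' u).1 (lt_of_le_of_ne h huv)) (not_le_of_gt hu)
    · exact absurd ((hu' v).1 (lt_of_le_of_ne h huv.symm)) (not_le_of_gt hv)
  · exact hs₂ α β h ((hbr β).2.1 v hvβ _ (h1.trans hv.le))
end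

section
/- Let κ be a regular uncountable cardinal, λ a cardinal, T a tree of height κ, and ⟨b_α : α < κ⟩ an injective enumeration of all cofinal branches of T. For each α < κ let s_α be the <_T-least element of b_α \ ⋃_{β<α} b_β, and let T* = {t ∈ T : there is no α < κ with s_α <_T t and t ∈ b_α}. Suppose F : T* → λ is such that whenever x ≠ y are in T* and F(x) = F(y), then x and y are <_T-incomparable. Then there exists F′ : T → λ with F′ ↾ T* = F such that F′ specializes T: for all x, y, z ∈ T, if x ≤_T y, x ≤_T z and F′(x) = F′(y) = F′(z), then y ≤_T z or z ≤_T y. -/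
open Cardinal

/-- Lemma 4.3.  If `F : T* → λ` takes equal values only on
`<`-incomparable nodes, then `F` extends to a specializing function
`F' : T → λ`: equal `F'`-values on `x ≤ y` and `x ≤ z` force `y, z` to be
comparable. -/
theorem specializing_function_extension (T : Type) [PartialOrder T]
    (htree : IsTreeOrder T) (κ : Cardinal) (lam : Cardinal)
    (hreg : κ.IsRegular) (hunc : aleph0 < κ)
    (hht : HasTreeHeight htree κ)
    (bseq : κ.ord.ToType → Set T)
    (hinj : Function.Injective bseq)
    (hbr : ∀ α, IsCofBranch htree κ (bseq α))
    (hall : ∀ c : Set T, IsCofBranch htree κ c → ∃ α, bseq α = c)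
    (s : κ.ord.ToType → T)
    (hs₁ : ∀ α, s α ∈ bseq α)
    (hs₂ : ∀ α, ∀ β < α, s α ∉ bseq β)
    (hs₃ : ∀ α, ∀ y ∈ bseq α, (∀ β < α, y ∉ bseq β) → s α ≤ y)
    (F : {t : T // t ∈ {t : T | ¬ ∃ α, s α < t ∧ t ∈ bseq α}} → lam.ord.ToType)
    (hF : ∀ x y : {t : T // t ∈ {t : T | ¬ ∃ α, s α < t ∧ t ∈ bseq α}},
      x ≠ y → F x = F y → ¬ x.1 ≤ y.1 ∧ ¬ y.1 ≤ x.1) :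
    ∃ F' : T → lam.ord.ToType,
      (∀ x : {t : T // t ∈ {t : T | ¬ ∃ α, s α < t ∧ t ∈ bseq α}}, F' x.1 = F x) ∧
      (∀ x y z : T, x ≤ y → x ≤ z → F' x = F' y → F' x = F' z → (y ≤ z ∨ z ≤ y)) := by
  classical
  have hcmp : ∀ a b t : T, a ≤ t → b ≤ t → a ≤ b ∨ b ≤ a := by
    intro a b t ha hb
    rcases ha.eq_or_lt with rfl | ha
    · exact Or.inr hb
    rcases hb.eq_or_lt with rfl | hb
    · exact Or.inl ha.le
    haveI := htree t
    rcases trichotomous_of (fun u v : {s : T // s < t} => u < v) ⟨a, ha⟩ ⟨b, hb⟩ with h | h | h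
    · exact Or.inl (le_of_lt (show a < b from h))
    · exact Or.inl (le_of_eq (congrArg Subtype.val h))
    · exact Or.inr (le_of_lt (show b < a from h))
  -- if `s β` lies below an element of `b α`, then `β ≤ α`
  have hle : ∀ α β t, t ∈ bseq α → s β ≤ t → β ≤ α := by
    intro α β t ht hst
    by_contra h
    exact hs₂ β α (not_le.mp h) ((hbr α).2.1 t ht _ hst)
  have hsinj : ∀ α β, s α = s β → α = β := by
    intro α β h
    exact le_antisymm (hle β α (s β) (hs₁ β) h.le) (hle α β (s α) (hs₁ α) h.ge)
  have hsT : ∀ α, ¬ ∃ β, s β < s α ∧ s α ∈ bseq β := by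
    rintro α ⟨β, hlt, hmem⟩
    have h1 := hle α β _ (hs₁ α) hlt.le
    have h2 := hle β α _ hmem le_rfl
    rw [le_antisymm h1 h2] at hlt
    exact lt_irrefl _ hlt
  have hr : ∀ t : T, ∃ r : T, (¬ ∃ β, s β < r ∧ r ∈ bseq β) ∧ r ≤ t ∧
      (r = t ∨ ∃ α, r = s α ∧ t ∈ bseq α) ∧ ((¬ ∃ β, s β < t ∧ t ∈ bseq β) → r = t) := by
    intro t
    by_cases h : ∃ β, s β < t ∧ t ∈ bseq β
    · obtain ⟨β, h1, h2⟩ := h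
      exact ⟨s β, hsT β, h1.le, Or.inr ⟨β, rfl, h2⟩, fun h => (h ⟨β, h1, h2⟩).elim⟩
    · exact ⟨t, h, le_rfl, Or.inl rfl, fun _ => rfl⟩
  choose r hrT hrle hror hreq using hr
  have key : ∀ x y : T, x ≤ y → F ⟨r x, hrT x⟩ = F ⟨r y, hrT y⟩ → r x = r y := by
    intro x y hxy hFxy
    by_contra hne
    have h := hF ⟨r x, hrT x⟩ ⟨r y, hrT y⟩ (fun h => hne (congrArg Subtype.val h)) hFxy
    rcases hcmp (r x) (r y) y ((hrle x).trans hxy) (hrle y) with h' | h'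
    · exact h.1 h'
    · exact h.2 h'
  refine ⟨fun t => F ⟨r t, hrT t⟩, ?_, ?_⟩
  · intro x
    exact congrArg F (Subtype.ext (hreq x.1 x.2))
  · intro x y z hxy hxz h1 h2
    have e1 := key x y hxy h1
    have e2 := key x z hxz h2
    have e : r y = r z := e1.symm.trans e2
    rcases hror y with hy | ⟨α, hα, hyα⟩
    · left
      rw [← hy, e]
      exact hrle z
    rcases hror z with hz | ⟨β, hβ, hzβ⟩
    · right
      rw [← hz, ← e]
      exact hrle y
    have hab : α = β := hsinj α β (by rw [← hα, ← hβ, e])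
    subst hab
    exact (hbr α).1.1.total hyα hzβ
end
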